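/- Convexity lemma with fixed base point: Let F be a Minkowski norm on a finite-dimensional real normed space V, and let u, v, w be F-unit vectors such that u is a nonnegative linear combination of v and w. Assume moreover that either F is reversible (F(−y) = F(y) for all y ∈ V) or ⟨v, w⟩_w^F ≥ 0. Then ⟨u, w⟩_w^F ≥ ⟨v, w⟩_w^F, and equality holds if and only if u = v. -/

import Mathlib

/-!
Put `G = F²` and `ℓ_w(x) = ½ DG(w) x`. Differentiating Euler's identity `DG(z) z = 2 G(z)` at `w`
in the direction `x` gives `⟨x, w⟩_w = ℓ_w(x)`, so only the linear form `ℓ_w` matters.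

The analytic input is the fundamental inequality `ℓ_w(x) ≤ 1` for `F`-unit vectors `x`, `w`, with
equality only if `x = w` (`half_fderiv_lt_one`). It holds because `G` is strictly convex along any
segment avoiding the origin; a segment from `w` to `x` through the origin means `x = -c w` with
`c ≥ 0`, where `ℓ_w(x) = -c ≤ 0`. The triangle inequality for `F` follows, since
`F(x + y) = ℓ_z(x + y)` for `z` the unit vector in the direction `x + y`.

Finally write `u = a v + b w` and `ℓ = ℓ_w`, so that `ℓ(u) - ℓ(v) = b - (1 - a) ℓ(v)`. The triangle
inequality gives `1 ≤ a + b`, which settles every case but `a > 1`, `ℓ(v) < 0`. There `F` is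
reversible, so `a v = u + b (-w)` gives `a ≤ 1 + b`, and `-ℓ(v) = ℓ(-v) ≤ 1` concludes.
-/

/-- One half of the second Fréchet derivative of `F²` at `y`, evaluated at `(u, w)`:
the fundamental bilinear form `⟨u,w⟩_y^F` associated to a Minkowski norm. -/
noncomputable def minkHess {V : Type*} [NormedAddCommGroup V] [NormedSpace ℝ V]
    (F : V → ℝ) (y u w : V) : ℝ :=
  (1 / 2) * fderiv ℝ (fun z => fderiv ℝ (fun x => F x ^ 2) z) y u w

/-- `F` is a Minkowski norm on `V`. -/
structure IsMinkowskiNorm {V : Type*} [NormedAddCommGroup V] [NormedSpace ℝ V]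
    (F : V → ℝ) : Prop where
  continuous : Continuous F
  nonneg : ∀ y : V, 0 ≤ F y
  pos : ∀ y : V, y ≠ 0 → 0 < F y
  smooth : ContDiffOn ℝ (⊤ : ℕ∞) F {(0 : V)}ᶜ
  homog : ∀ l : ℝ, 0 ≤ l → ∀ y : V, F (l • y) = l * F y
  posdef : ∀ y : V, y ≠ 0 → ∀ u : V, u ≠ 0 → 0 < minkHess F y u u

namespace IsMinkowskiNorm

variable {V : Type*} [NormedAddCommGroup V] [NormedSpace ℝ V] {F : V → ℝ}

theorem map_zero (hF : IsMinkowskiNorm F) : F 0 = 0 := by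
  have h := hF.homog 0 le_rfl 0
  simpa using h

theorem ne_zero_of_unit (hF : IsMinkowskiNorm F) {w : V} (hw : F w = 1) : w ≠ 0 := by
  rintro rfl
  rw [hF.map_zero] at hw
  exact zero_ne_one hw

theorem contDiffAt_sq (hF : IsMinkowskiNorm F) {y : V} (hy : y ≠ 0) :
    ContDiffAt ℝ 2 (fun x => F x ^ 2) y := by
  have h : ContDiffAt ℝ (⊤ : ℕ∞) F y :=
    hF.smooth.contDiffAt (isOpen_compl_singleton.mem_nhds hy)
  exact (h.of_le (WithTop.coe_le_coe.2 le_top)).pow 2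

theorem hasFDerivAt_sq (hF : IsMinkowskiNorm F) {y : V} (hy : y ≠ 0) :
    HasFDerivAt (fun x => F x ^ 2) (fderiv ℝ (fun x => F x ^ 2) y) y :=
  ((hF.contDiffAt_sq hy).differentiableAt (by norm_num)).hasFDerivAt

theorem hasFDerivAt_fderiv_sq (hF : IsMinkowskiNorm F) {y : V} (hy : y ≠ 0) :
    HasFDerivAt (fun z => fderiv ℝ (fun x => F x ^ 2) z)
      (fderiv ℝ (fun z => fderiv ℝ (fun x => F x ^ 2) z) y) y :=
  (((hF.contDiffAt_sq hy).fderiv_right (m := 1) (by norm_num)).differentiableAt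
    (by norm_num)).hasFDerivAt

/-- Euler's identity for the 2-homogeneous function `F²`. -/
theorem euler_sq (hF : IsMinkowskiNorm F) {y : V} (hy : y ≠ 0) :
    fderiv ℝ (fun x => F x ^ 2) y y = 2 * F y ^ 2 := by
  have h1 : HasDerivAt (fun t : ℝ => t • y) y 1 := by
    simpa using (hasDerivAt_id (1 : ℝ)).smul_const y
  have h2 : HasDerivAt (fun t : ℝ => F (t • y) ^ 2) (fderiv ℝ (fun x => F x ^ 2) y y) 1 :=
    HasFDerivAt.comp_hasDerivAt_of_eq (l := fun x => F x ^ 2) (1 : ℝ) (hF.hasFDerivAt_sq hy) h1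
      (by simp)
  have h3 : HasDerivAt (fun t : ℝ => t ^ 2 * F y ^ 2) (2 * F y ^ 2) 1 := by
    simpa using (hasDerivAt_pow 2 (1 : ℝ)).mul_const (F y ^ 2)
  refine h2.unique (h3.congr_of_eventuallyEq ?_)
  filter_upwards [lt_mem_nhds (zero_lt_one (α := ℝ))] with t ht
  rw [hF.homog t ht.le, mul_pow]

/-- Differentiating Euler's identity at `y` in the direction `x`. -/
theorem minkHess_self_right (hF : IsMinkowskiNorm F) {y : V} (hy : y ≠ 0) (x : V) :
    minkHess F y x y = (1 / 2) * fderiv ℝ (fun x => F x ^ 2) y x := by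
  have h1 := (hF.hasFDerivAt_fderiv_sq hy).clm_apply (hasFDerivAt_id y)
  have h2 := (hF.hasFDerivAt_sq hy).const_mul 2
  have h3 := h1.unique (h2.congr_of_eventuallyEq (by
    filter_upwards [isOpen_compl_singleton.mem_nhds hy] with z hz
    exact hF.euler_sq hz))
  have h4 := congrArg (fun L : V →L[ℝ] ℝ => L x) h3
  simp at h4
  unfold minkHess
  linarith

/-- Strict convexity of `F²` along a segment avoiding the origin: the graph lies above the tangent
at the endpoint `w`. -/
theorem tangent_lt (hF : IsMinkowskiNorm F) {x w : V} (hne : x ≠ w)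
    (hseg : ∀ t ∈ Set.Icc (0 : ℝ) 1, w + t • (x - w) ≠ 0) :
    F w ^ 2 + fderiv ℝ (fun x => F x ^ 2) w (x - w) < F x ^ 2 := by
  have hγ : ∀ t : ℝ, HasDerivAt (fun t : ℝ => w + t • (x - w)) (x - w) t := fun t => by
    simpa using ((hasDerivAt_id t).smul_const (x - w)).const_add w
  have hg : ∀ t ∈ Set.Icc (0 : ℝ) 1, HasDerivAt (fun t : ℝ => F (w + t • (x - w)) ^ 2)
      (fderiv ℝ (fun x => F x ^ 2) (w + t • (x - w)) (x - w)) t := fun t ht =>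
    HasFDerivAt.comp_hasDerivAt (l := fun x => F x ^ 2) t (hF.hasFDerivAt_sq (hseg t ht)) (hγ t)
  have hg' : ∀ t ∈ Set.Icc (0 : ℝ) 1,
      HasDerivAt (fun t : ℝ => fderiv ℝ (fun x => F x ^ 2) (w + t • (x - w)) (x - w))
      (fderiv ℝ (fun z => fderiv ℝ (fun x => F x ^ 2) z) (w + t • (x - w)) (x - w) (x - w)) t :=
    fun t ht => by
      have := (HasFDerivAt.comp_hasDerivAt t (hF.hasFDerivAt_fderiv_sq (hseg t ht)) (hγ t)).clm_apply
        (hasDerivAt_const t (x - w))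
      simpa using this
  obtain ⟨c, hc, hc'⟩ := exists_hasDerivAt_eq_slope _ _ zero_lt_one
    (fun t ht => (hg t ht).continuousAt.continuousWithinAt)
    (fun t ht => hg t (Set.Ioo_subset_Icc_self ht))
  obtain ⟨d, hd, hd'⟩ := exists_hasDerivAt_eq_slope _ _ hc.1
    (fun t ht => (hg' t ⟨ht.1, ht.2.trans hc.2.le⟩).continuousAt.continuousWithinAt)
    (fun t ht => hg' t ⟨ht.1.le, (ht.2.trans hc.2).le⟩)
  have hpos := hF.posdef _ (hseg d ⟨hd.1.le, (hd.2.trans hc.2).le⟩) _ (sub_ne_zero.2 hne)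
  unfold minkHess at hpos
  rw [hd', sub_zero] at hpos
  have hdiff := (div_pos_iff_of_pos_right hc.1).1 (pos_of_mul_pos_right hpos (by norm_num))
  simp only [zero_smul, add_zero, one_smul, add_sub_cancel, sub_zero, div_one] at hc' hdiff
  linarith

/-- The fundamental inequality for distinct unit vectors. -/
theorem half_fderiv_lt_one (hF : IsMinkowskiNorm F) {x w : V} (hx : F x = 1) (hw : F w = 1)
    (hne : x ≠ w) : (1 / 2) * fderiv ℝ (fun x => F x ^ 2) w x < 1 := by
  have hE := hF.euler_sq (hF.ne_zero_of_unit hw)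
  rw [hw] at hE
  by_cases hseg : ∀ t ∈ Set.Icc (0 : ℝ) 1, w + t • (x - w) ≠ 0
  · have h := hF.tangent_lt hne hseg
    rw [map_sub, hE, hx, hw] at h
    linarith
  · push Not at hseg
    obtain ⟨t, ht, h0⟩ := hseg
    -- Here `t x = -(1 - t) w`, so `ℓ_w(x)` is nonpositive (and `t ≠ 0` because `w ≠ 0`).
    have h1 := congrArg (fderiv ℝ (fun x => F x ^ 2) w) h0
    rw [map_add, map_smul, map_sub, hE, _root_.map_zero, smul_eq_mul] at h1
    have ht0 : 0 < t := by
      refine lt_of_le_of_ne ht.1 fun h => ?_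
      rw [← h] at h1
      norm_num at h1
    by_contra hcon
    nlinarith [ht.2]

theorem half_fderiv_le (hF : IsMinkowskiNorm F) {w : V} (hw : F w = 1) (x : V) :
    (1 / 2) * fderiv ℝ (fun x => F x ^ 2) w x ≤ F x := by
  rcases eq_or_ne x 0 with rfl | hx
  · simp [hF.map_zero]
  have hpos := hF.pos x hx
  have hunit : F ((F x)⁻¹ • x) = 1 := by
    rw [hF.homog _ (inv_nonneg.2 hpos.le), inv_mul_cancel₀ hpos.ne']
  have key : (1 / 2) * fderiv ℝ (fun x => F x ^ 2) w ((F x)⁻¹ • x) ≤ 1 := by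
    by_cases h : (F x)⁻¹ • x = w
    · rw [h, hF.euler_sq (hF.ne_zero_of_unit hw), hw]
      norm_num
    · exact (hF.half_fderiv_lt_one hunit hw h).le
  rw [map_smul, smul_eq_mul] at key
  have := mul_le_mul_of_nonneg_left key hpos.le
  field_simp at this
  linarith

theorem triangle (hF : IsMinkowskiNorm F) (x y : V) : F (x + y) ≤ F x + F y := by
  rcases eq_or_ne (x + y) 0 with h0 | h0
  · rw [h0, hF.map_zero]
    exact add_nonneg (hF.nonneg x) (hF.nonneg y)
  have hpos := hF.pos _ h0
  set z := (F (x + y))⁻¹ • (x + y) with hz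
  have hunit : F z = 1 := by
    rw [hz, hF.homog _ (inv_nonneg.2 hpos.le), inv_mul_cancel₀ hpos.ne']
  have hxy : x + y = F (x + y) • z := by
    rw [hz, smul_inv_smul₀ hpos.ne']
  have hE := hF.euler_sq (hF.ne_zero_of_unit hunit)
  rw [hunit] at hE
  have hsum := congrArg (fderiv ℝ (fun x => F x ^ 2) z) hxy
  rw [map_add, map_smul, hE, smul_eq_mul] at hsum
  linarith [hF.half_fderiv_le hunit x, hF.half_fderiv_le hunit y]

end IsMinkowskiNorm

/-- Convexity lemma with fixed base point. -/
theorem convexity_lemma_fixed_base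
    {V : Type*} [NormedAddCommGroup V] [NormedSpace ℝ V] [FiniteDimensional ℝ V]
    (F : V → ℝ) (hF : IsMinkowskiNorm F)
    (u v w : V) (hu : F u = 1) (hv : F v = 1) (hw : F w = 1)
    (hcomb : ∃ a b : ℝ, 0 ≤ a ∧ 0 ≤ b ∧ u = a • v + b • w)
    (hside : (∀ y : V, F (-y) = F y) ∨ 0 ≤ minkHess F w v w) :
    minkHess F w v w ≤ minkHess F w u w ∧
      (minkHess F w u w = minkHess F w v w ↔ u = v) := by
  obtain ⟨a, b, ha, hb, huab⟩ := hcomb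
  -- For `u = v` everything is trivial, so only a strict inequality for `u ≠ v` is needed.
  suffices H : u ≠ v → minkHess F w v w < minkHess F w u w by
    rcases eq_or_ne u v with rfl | hne
    · simp
    · exact ⟨(H hne).le, fun h => absurd h (H hne).ne', fun h => absurd h hne⟩
  intro hne
  have hw0 := hF.ne_zero_of_unit hw
  have hvw : v ≠ w := by
    rintro rfl
    rw [← add_smul] at huab
    have h1 := hF.homog (a + b) (add_nonneg ha hb) v
    rw [← huab, hu, hv, mul_one] at h1
    rw [← h1, one_smul] at huab
    exact hne huab
  have hE := hF.euler_sq hw0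
  rw [hw] at hE
  have hlu : minkHess F w u w = a * minkHess F w v w + b := by
    rw [hF.minkHess_self_right hw0, hF.minkHess_self_right hw0, huab, map_add, map_smul, map_smul,
      hE, smul_eq_mul, smul_eq_mul]
    ring
  have hlt : minkHess F w v w < 1 := by
    rw [hF.minkHess_self_right hw0]
    exact hF.half_fderiv_lt_one hv hw hvw
  have htri : 1 ≤ a + b := by
    have h := hF.triangle (a • v) (b • w)
    rwa [← huab, hF.homog a ha, hF.homog b hb, hu, hv, hw, mul_one, mul_one] at h
  have hb0 : b = 0 → a = 1 → False := by
    rintro rfl rfl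
    exact hne (by simpa using huab)
  have hb1 : b = 0 → a = 1 := by
    rintro rfl
    have h := hF.homog a ha v
    rw [zero_smul, add_zero] at huab
    rw [← huab, hu, hv, mul_one] at h
    exact h.symm
  have hbpos : 0 < b := lt_of_le_of_ne hb fun h => hb0 h.symm (hb1 h.symm)
  rw [hlu]
  rcases lt_trichotomy a 1 with h1 | h1 | h1
  · nlinarith
  · rw [h1]
    linarith
  · rcases le_or_gt 0 (minkHess F w v w) with h0 | h0
    · nlinarith
    · have hrev : ∀ y : V, F (-y) = F y := hside.resolve_right (not_le.2 h0)
      have hav : a • v = u + b • (-w) := by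
        rw [huab, smul_neg, add_neg_cancel_right]
      have hab : a ≤ 1 + b := by
        have h := hF.triangle u (b • (-w))
        rwa [← hav, hF.homog a ha, hF.homog b hb, hrev, hu, hv, hw, mul_one, mul_one] at h
      by_cases hnvw : -v = w
      · -- Here `ℓ(v) = -1`, and `a = 1 + b` would give `u = (a - b) v = v`.
        have hlv : minkHess F w v w = -1 := by
          have h := hE
          nth_rewrite 2 [← hnvw] at h
          rw [map_neg] at h
          rw [hF.minkHess_self_right hw0]
          linarith
        have hab' : a ≠ 1 + b := by
          rintro rfl
          apply hne
          rw [huab, ← hnvw, smul_neg, add_smul, one_smul, add_neg_cancel_right]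
        rw [hlv]
        linarith [lt_of_le_of_ne hab hab']
      · have hneg : -minkHess F w v w < 1 := by
          have h := hF.half_fderiv_lt_one ((hrev v).trans hv) hw hnvw
          rw [map_neg] at h
          rw [hF.minkHess_self_right hw0]
          linarith
        nlinarith
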